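/- For any positive masses m₁, m₂, m₃, m₄, any two sequentially-ordered co-circular planar central configurations are similar. Precisely: suppose q = (q₁,...,q₄) and q' = (q'₁,...,q'₄) are quadruples of pairwise distinct points in ℝ² with Σ m_i q_i = 0 and Σ m_i q'_i = 0, each satisfying the central configuration equations λ m_i q_i = Σ_{j≠i} m_i m_j (q_j − q_i)/‖q_j − q_i‖³ (for some λ ∈ ℝ, respectively λ' ∈ ℝ), each lying on a common circle, and each satisfying Ptolemy's equality ‖q₁−q₂‖‖q₃−q₄‖ + ‖q₁−q₄‖‖q₂−q₃‖ = ‖q₁−q₃‖‖q₂−q₄‖ (i.e. the bodies are ordered sequentially on the circle). Then there exist a nonzero real number k and a linear isometry R of ℝ² such that q'_i = k R q_i for i = 1, 2, 3, 4. -/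

import Mathlib

open Finset

section Isometry

variable {ι V : Type*} [Fintype ι] [NormedAddCommGroup V] [InnerProductSpace ℝ V]

theorem exists_linearIsometryEquiv_of_inner_eq [FiniteDimensional ℝ V] (v w : ι → V)
    (h : ∀ i j, inner ℝ (v i) (v j) = inner ℝ (w i) (w j)) :
    ∃ R : V ≃ₗᵢ[ℝ] V, ∀ i, R (v i) = w i := by
  classical
  let f := Fintype.linearCombination ℝ v
  let g := Fintype.linearCombination ℝ w
  have hnorm (c : ι → ℝ) : ‖f c‖ = ‖g c‖ := by
    rw [← sq_eq_sq₀ (norm_nonneg _) (norm_nonneg _), ← real_inner_self_eq_norm_sq,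
      ← real_inner_self_eq_norm_sq]
    simp only [f, g, Fintype.linearCombination_apply, sum_inner, inner_sum, real_inner_smul_left,
      real_inner_smul_right, h]
  have hker : LinearMap.ker f ≤ LinearMap.ker g := fun c hc ↦ by
    rw [LinearMap.mem_ker] at hc ⊢
    rw [← norm_eq_zero, ← hnorm, hc, norm_zero]
  let L : LinearMap.range f →ₗ[ℝ] V :=
    (LinearMap.ker f).liftQ g hker ∘ₗ f.quotKerEquivRange.symm.toLinearMap
  have hL (c : ι → ℝ) : L ⟨f c, LinearMap.mem_range_self f c⟩ = g c := by
    have : f.quotKerEquivRange.symm ⟨f c, LinearMap.mem_range_self f c⟩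
        = (LinearMap.ker f).mkQ c := f.quotKerEquivRange_symm_apply_image c _
    simp only [L, LinearMap.comp_apply, LinearEquiv.coe_coe, this]
    exact (LinearMap.ker f).liftQ_apply g c
  let L' : LinearMap.range f →ₗᵢ[ℝ] V := ⟨L, by
    rintro ⟨_, c, rfl⟩
    rw [hL, ← hnorm]
    rfl⟩
  refine ⟨L'.extend.toLinearIsometryEquiv rfl, fun i ↦ ?_⟩
  have hf : f (Pi.single i 1) = v i := by simp [f]
  have hg : g (Pi.single i 1) = w i := by simp [g]
  have := L'.extend_apply ⟨f (Pi.single i 1), LinearMap.mem_range_self f _⟩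
  rw [← hg, ← hL, LinearIsometry.toLinearIsometryEquiv_apply, ← hf]
  exact this

theorem sum_mul_norm_sub_sq_of_sum_smul_eq_zero (m : ι → ℝ) (v : ι → V)
    (hcm : ∑ i, m i • v i = 0) (x : V) :
    ∑ j, m j * ‖x - v j‖ ^ 2 = (∑ j, m j) * ‖x‖ ^ 2 + ∑ j, m j * ‖v j‖ ^ 2 := by
  have h0 : ∑ j, m j * inner ℝ x (v j) = 0 := by
    simpa [inner_sum, real_inner_smul_right] using congrArg (inner ℝ x) hcm
  have : ∑ j, m j * ‖x - v j‖ ^ 2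
      = ∑ j, (m j * ‖x‖ ^ 2 - 2 * (m j * inner ℝ x (v j)) + m j * ‖v j‖ ^ 2) :=
    sum_congr rfl fun j _ ↦ by rw [norm_sub_sq_real]; ring
  rw [this, sum_add_distrib, sum_sub_distrib, ← mul_sum, h0, sum_mul]
  ring

theorem inner_eq_of_norm_sub_eq (m : ι → ℝ) (hm : 0 < ∑ i, m i) (v w : ι → V)
    (hv : ∑ i, m i • v i = 0) (hw : ∑ i, m i • w i = 0)
    (h : ∀ i j, ‖v i - v j‖ = ‖w i - w j‖) (i j : ι) :
    inner ℝ (v i) (v j) = inner ℝ (w i) (w j) := by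
  have key (i : ι) : (∑ j, m j) * ‖v i‖ ^ 2 + ∑ j, m j * ‖v j‖ ^ 2
      = (∑ j, m j) * ‖w i‖ ^ 2 + ∑ j, m j * ‖w j‖ ^ 2 := by
    rw [← sum_mul_norm_sub_sq_of_sum_smul_eq_zero m v hv,
      ← sum_mul_norm_sub_sq_of_sum_smul_eq_zero m w hw]
    simp only [h]
  have htot : ∑ j, m j * ‖v j‖ ^ 2 = ∑ j, m j * ‖w j‖ ^ 2 := by
    have := sum_congr (s₁ := univ) rfl fun i _ ↦ congrArg (m i * ·) (key i)
    simp only [mul_add, sum_add_distrib, ← sum_mul, mul_left_comm (m _), ← mul_sum] at this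
    exact mul_left_cancel₀ hm.ne' (by linarith)
  have hn (i : ι) : ‖v i‖ ^ 2 = ‖w i‖ ^ 2 :=
    mul_left_cancel₀ hm.ne' (by linarith [key i])
  have h1 := norm_sub_sq_real (v i) (v j)
  have h2 := norm_sub_sq_real (w i) (w j)
  rw [h i j, hn i, hn j] at h1
  linarith

end Isometry

section Convexity

/-- The mutual distances `r i j` satisfy Ptolemy's equality and are a critical point of
`∑ m i * m j * (1 / r i j + μ * r i j ^ 2 / 2)` subject to it, with multiplier `κ`. -/
structure IsPtolemyCritical (m : Fin 4 → ℝ) (μ κ : ℝ) (r : Fin 4 → Fin 4 → ℝ) : Prop where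
  ptolemy : r 0 1 * r 2 3 + r 0 3 * r 1 2 = r 0 2 * r 1 3
  eq01 : m 0 * m 1 * (1 / r 0 1 - μ * r 0 1 ^ 2) = κ * (r 0 1 * r 2 3)
  eq23 : m 2 * m 3 * (1 / r 2 3 - μ * r 2 3 ^ 2) = κ * (r 0 1 * r 2 3)
  eq03 : m 0 * m 3 * (1 / r 0 3 - μ * r 0 3 ^ 2) = κ * (r 0 3 * r 1 2)
  eq12 : m 1 * m 2 * (1 / r 1 2 - μ * r 1 2 ^ 2) = κ * (r 0 3 * r 1 2)
  eq02 : m 0 * m 2 * (1 / r 0 2 - μ * r 0 2 ^ 2) = -κ * (r 0 2 * r 1 3)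
  eq13 : m 1 * m 3 * (1 / r 1 3 - μ * r 1 3 ^ 2) = -κ * (r 0 2 * r 1 3)

theorem log_sum_inequality {a b c a' b' c' : ℝ} (ha : 0 < a) (hb : 0 < b) (hc : 0 < c)
    (ha' : 0 < a') (hb' : 0 < b') (hc' : 0 < c') (h : a + b = c) (h' : a' + b' = c') :
    a * (Real.log a' - Real.log a) + b * (Real.log b' - Real.log b)
      ≤ c * (Real.log c' - Real.log c) := by
  have key {a a' : ℝ} (ha : 0 < a) (ha' : 0 < a') :
      a * (Real.log a' - Real.log a - (Real.log c' - Real.log c)) ≤ a' * c / c' - a := by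
    have h1 := Real.log_le_sub_one_of_pos (show 0 < a' / a / (c' / c) by positivity)
    rw [Real.log_div (by positivity) (by positivity), Real.log_div ha'.ne' ha.ne',
      Real.log_div hc'.ne' hc.ne'] at h1
    calc _ ≤ a * (a' / a / (c' / c) - 1) := mul_le_mul_of_nonneg_left h1 ha.le
      _ = a' * c / c' - a := by field_simp
  have h1 := key ha ha'
  have h2 := key hb hb'
  have h3 : a' * c / c' + b' * c / c' = c := by
    rw [← add_div, ← add_mul, h']
    field_simp
  rw [← h] at *
  linarith

theorem mul_inv_sub_mul_log_nonpos {w μ r s : ℝ} (hw : 0 < w) (hμ : 0 < μ) (hr : 0 < r)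
    (hs : 0 < s) :
    w * ((1 / r - μ * r ^ 2) - (1 / s - μ * s ^ 2)) * (Real.log r - Real.log s) ≤ 0 ∧
    (w * ((1 / r - μ * r ^ 2) - (1 / s - μ * s ^ 2)) * (Real.log r - Real.log s) = 0 → r = s) := by
  have key {r s : ℝ} (hr : 0 < r) (h : r < s) :
      w * ((1 / r - μ * r ^ 2) - (1 / s - μ * s ^ 2)) * (Real.log r - Real.log s) < 0 := by
    have h1 : 1 / s < 1 / r := one_div_lt_one_div_of_lt hr h
    have h2 : μ * r ^ 2 < μ * s ^ 2 := by gcongr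
    have h3 := Real.log_lt_log hr h
    exact mul_neg_of_pos_of_neg (mul_pos hw (by linarith)) (by linarith)
  rcases lt_trichotomy r s with h | h | h
  · exact ⟨(key hr h).le, fun h0 ↦ absurd h0 (key hr h).ne⟩
  · simp [h]
  · have := key hs h
    constructor
    · linarith
    · intro h0; linarith

theorem IsPtolemyCritical.eq {m : Fin 4 → ℝ} (hm : ∀ i, 0 < m i) {μ κ κ' : ℝ} (hμ : 0 < μ)
    (hκ : 0 < κ) (hκ' : 0 < κ') {r r' : Fin 4 → Fin 4 → ℝ}
    (hr : ∀ i j, i ≠ j → 0 < r i j) (hr' : ∀ i j, i ≠ j → 0 < r' i j)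
    (h : IsPtolemyCritical m μ κ r) (h' : IsPtolemyCritical m μ κ' r') :
    r 0 1 = r' 0 1 ∧ r 2 3 = r' 2 3 ∧ r 0 3 = r' 0 3 ∧ r 1 2 = r' 1 2 ∧ r 0 2 = r' 0 2 ∧
      r 1 3 = r' 1 3 := by
  have mono {i j : Fin 4} (hij : i ≠ j) :=
    mul_inv_sub_mul_log_nonpos (mul_pos (hm i) (hm j)) hμ (hr i j hij) (hr' i j hij)
  obtain ⟨l01, e01⟩ := mono (show (0 : Fin 4) ≠ 1 by decide)
  obtain ⟨l23, e23⟩ := mono (show (2 : Fin 4) ≠ 3 by decide)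
  obtain ⟨l03, e03⟩ := mono (show (0 : Fin 4) ≠ 3 by decide)
  obtain ⟨l12, e12⟩ := mono (show (1 : Fin 4) ≠ 2 by decide)
  obtain ⟨l02, e02⟩ := mono (show (0 : Fin 4) ≠ 2 by decide)
  obtain ⟨l13, e13⟩ := mono (show (1 : Fin 4) ≠ 3 by decide)
  have p01 := hr 0 1 (by decide)
  have p23 := hr 2 3 (by decide)
  have p03 := hr 0 3 (by decide)
  have p12 := hr 1 2 (by decide)
  have p02 := hr 0 2 (by decide)
  have p13 := hr 1 3 (by decide)
  have p01' := hr' 0 1 (by decide)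
  have p23' := hr' 2 3 (by decide)
  have p03' := hr' 0 3 (by decide)
  have p12' := hr' 1 2 (by decide)
  have p02' := hr' 0 2 (by decide)
  have p13' := hr' 1 3 (by decide)
  have c1 := log_sum_inequality (mul_pos p01 p23) (mul_pos p03 p12) (mul_pos p02 p13)
    (mul_pos p01' p23') (mul_pos p03' p12') (mul_pos p02' p13') h.ptolemy h'.ptolemy
  have c2 := log_sum_inequality (mul_pos p01' p23') (mul_pos p03' p12') (mul_pos p02' p13')
    (mul_pos p01 p23) (mul_pos p03 p12) (mul_pos p02 p13) h'.ptolemy h.ptolemy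
  simp only [Real.log_mul, p01.ne', p23.ne', p03.ne', p12.ne', p02.ne', p13.ne', p01'.ne',
    p23'.ne', p03'.ne', p12'.ne', p02'.ne', p13'.ne', ne_eq, not_false_eq_true] at c1 c2
  have c1 := mul_le_mul_of_nonneg_left c1 hκ.le
  have c2 := mul_le_mul_of_nonneg_left c2 hκ'.le
  simp only [mul_sub (m _ * m _) (1 / _ - _), h.eq01, h.eq23, h.eq03, h.eq12, h.eq02, h.eq13,
    h'.eq01, h'.eq23, h'.eq03, h'.eq12, h'.eq02, h'.eq13] at *
  exact ⟨e01 (by linarith), e23 (by linarith), e03 (by linarith), e12 (by linarith),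
    e02 (by linarith), e13 (by linarith)⟩

theorem IsPtolemyCritical.smul {m : Fin 4 → ℝ} {μ κ k : ℝ} (hk : 0 < k)
    {r : Fin 4 → Fin 4 → ℝ} (h : IsPtolemyCritical m (μ * k ^ 3) κ r) :
    IsPtolemyCritical m μ (κ / k ^ 3) (fun i j ↦ k * r i j) := by
  have scale (w κ r A B : ℝ) (h : w * (1 / r - μ * k ^ 3 * r ^ 2) = κ * (A * B)) :
      w * (1 / (k * r) - μ * (k * r) ^ 2) = κ / k ^ 3 * ((k * A) * (k * B)) := by
    have : w * (1 / (k * r) - μ * (k * r) ^ 2)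
        = w * (1 / r - μ * k ^ 3 * r ^ 2) / k := by
      rw [one_div, one_div, mul_inv]; field_simp
    rw [this, h]
    field_simp
  refine ⟨?_, scale _ _ _ _ _ h.eq01, scale _ _ _ _ _ h.eq23, scale _ _ _ _ _ h.eq03,
    scale _ _ _ _ _ h.eq12, ?_, ?_⟩
  · linear_combination k ^ 2 * h.ptolemy
  · rw [← neg_div]; exact scale _ _ _ _ _ h.eq02
  · rw [← neg_div]; exact scale _ _ _ _ _ h.eq13

theorem IsPtolemyCritical.pos {m : Fin 4 → ℝ} (hm : ∀ i, 0 < m i) {μ κ : ℝ}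
    {r : Fin 4 → Fin 4 → ℝ} (hr : ∀ i j, i ≠ j → 0 < r i j) (h : IsPtolemyCritical m μ κ r) :
    0 < μ ∧ 0 < κ := by
  have p01 := hr 0 1 (by decide)
  have p23 := hr 2 3 (by decide)
  have p03 := hr 0 3 (by decide)
  have p12 := hr 1 2 (by decide)
  have p02 := hr 0 2 (by decide)
  have p13 := hr 1 3 (by decide)
  have hw (i j : Fin 4) := mul_pos (hm i) (hm j)
  have hside {w r A B : ℝ} (hw : 0 < w) (hr : 0 < r) (hA : 0 < A) (hB : 0 < B) (hκ : κ ≤ 0)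
      (h : w * (1 / r - μ * r ^ 2) = κ * (A * B)) : 1 ≤ μ * r ^ 3 := by
    have h1 : κ * (A * B) ≤ 0 := mul_nonpos_of_nonpos_of_nonneg hκ (by positivity)
    have h2 : 1 / r - μ * r ^ 2 ≤ 0 := by
      by_contra! hc
      have := mul_pos hw hc
      linarith
    have h3 : (1 / r - μ * r ^ 2) * r = 1 - μ * r ^ 3 := by field_simp
    nlinarith
  have hdiag {w r A B : ℝ} (hw : 0 < w) (hr : 0 < r) (hA : 0 < A) (hB : 0 < B) (hκ : κ ≤ 0)
      (h : w * (1 / r - μ * r ^ 2) = -κ * (A * B)) : μ * r ^ 3 ≤ 1 := by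
    have h1 : 0 ≤ -κ * (A * B) := mul_nonneg (by linarith) (by positivity)
    have h2 : 0 ≤ 1 / r - μ * r ^ 2 := by
      by_contra! hc
      have := mul_neg_of_pos_of_neg hw hc
      linarith
    have h3 : (1 / r - μ * r ^ 2) * r = 1 - μ * r ^ 3 := by field_simp
    nlinarith
  have hκ : 0 < κ := by
    by_contra! hκ
    have s01 := hside (hw 0 1) p01 p01 p23 hκ h.eq01
    have s23 := hside (hw 2 3) p23 p01 p23 hκ h.eq23
    have d02 := hdiag (hw 0 2) p02 p02 p13 hκ h.eq02
    have d13 := hdiag (hw 1 3) p13 p02 p13 hκ h.eq13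
    have hμ : 0 < μ := pos_of_mul_pos_left (lt_of_lt_of_le one_pos s01) (by positivity)
    have i1 : r 0 2 ≤ r 0 1 := le_of_pow_le_pow_left₀ (n := 3) (by norm_num) p01.le
      (le_of_mul_le_mul_left (d02.trans s01) hμ)
    have i2 : r 1 3 ≤ r 2 3 := le_of_pow_le_pow_left₀ (n := 3) (by norm_num) p23.le
      (le_of_mul_le_mul_left (d13.trans s23) hμ)
    have := mul_le_mul i1 i2 p13.le p01.le
    have := mul_pos p03 p12
    linarith [h.ptolemy]
  refine ⟨?_, hκ⟩
  by_contra! hμ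
  have h1 : 0 < m 0 * m 2 * (1 / r 0 2 - μ * r 0 2 ^ 2) := by
    have : μ * r 0 2 ^ 2 ≤ 0 := mul_nonpos_of_nonpos_of_nonneg hμ (by positivity)
    have : 0 < 1 / r 0 2 := by positivity
    exact mul_pos (hw 0 2) (by linarith)
  rw [h.eq02] at h1
  have : 0 < κ * (r 0 2 * r 1 3) := by positivity
  linarith

end Convexity

section CentralConfiguration

theorem sum_smul_sub_eq_zero_of_central {ι V : Type*} [Fintype ι] [DecidableEq ι]
    [NormedAddCommGroup V] [NormedSpace ℝ V] (m : ι → ℝ) (hm : ∀ i, 0 < m i)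
    (q : ι → V) (hcm : ∑ i, m i • q i = 0) (lam : ℝ)
    (hcc : ∀ i, (lam * m i) • q i =
      ∑ j ∈ univ.erase i, ((m i * m j) / ‖q j - q i‖ ^ 3) • (q j - q i)) (i : ι) :
    ∑ j, (m j * (1 / ‖q j - q i‖ ^ 3 - -lam / ∑ k, m k)) • (q j - q i) = 0 := by
  have hM : 0 < ∑ k, m k := sum_pos (fun i _ ↦ hm i) ⟨i, mem_univ i⟩
  have h1 : ∑ j, m j • (q j - q i) = -(∑ k, m k) • q i := by
    simp only [smul_sub, sum_sub_distrib, hcm, ← sum_smul]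
    simp
  have h2 : m i • ∑ j, (m j / ‖q j - q i‖ ^ 3) • (q j - q i) = (lam * m i) • q i := by
    rw [hcc i, sum_erase _ (by simp), smul_sum]
    exact sum_congr rfl fun j _ ↦ by rw [smul_smul, mul_div_assoc]
  have h3 : ∑ j, (m j / ‖q j - q i‖ ^ 3) • (q j - q i) = lam • q i := by
    rw [mul_comm, mul_smul] at h2
    exact smul_right_injective V (hm i).ne' h2
  have h4 : ∑ j, (m j * (1 / ‖q j - q i‖ ^ 3 - -lam / ∑ k, m k)) • (q j - q i)
      = ∑ j, (m j / ‖q j - q i‖ ^ 3) • (q j - q i)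
        + (lam / ∑ k, m k) • ∑ j, m j • (q j - q i) := by
    rw [smul_sum, ← sum_add_distrib]
    refine sum_congr rfl fun j _ ↦ ?_
    rw [smul_smul, ← add_smul]
    congr 1
    ring
  rw [h4, h3, h1, smul_smul, ← add_smul]
  have : lam + lam / (∑ k, m k) * -(∑ k, m k) = 0 := by field_simp; ring
  rw [this, zero_smul]

theorem exists_double_angle {u v : ℝ} (h : u ^ 2 + v ^ 2 = 1) :
    ∃ x y : ℝ, x ^ 2 + y ^ 2 = 1 ∧ u = x ^ 2 - y ^ 2 ∧ v = 2 * x * y := by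
  have hz : ‖(⟨u, v⟩ : ℂ)‖ = 1 := by
    rw [← sq_eq_sq₀ (norm_nonneg _) zero_le_one, Complex.sq_norm, Complex.normSq_mk]
    linarith
  have hz0 : (⟨u, v⟩ : ℂ) ≠ 0 := by
    intro h0
    simp [h0] at hz
  have hc := Complex.cos_arg hz0
  have hs := Complex.sin_arg (⟨u, v⟩ : ℂ)
  rw [hz, div_one] at hc hs
  set θ := Complex.arg ⟨u, v⟩
  have h2 : θ = 2 * (θ / 2) := by ring
  refine ⟨Real.cos (θ / 2), Real.sin (θ / 2), Real.cos_sq_add_sin_sq _, ?_, ?_⟩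
  · rw [← Real.cos_two_mul', ← h2]; exact hc.symm
  · rw [mul_right_comm, ← Real.sin_two_mul, ← h2]; exact hs.symm

theorem exists_halfAngle_of_cocircular {ι : Type*} (q : ι → EuclideanSpace ℝ (Fin 2))
    (c : EuclideanSpace ℝ (Fin 2)) {ρ : ℝ} (hρ : 0 < ρ) (h : ∀ i, dist (q i) c = ρ) :
    ∃ x y : ι → ℝ, ∀ i, x i ^ 2 + y i ^ 2 = 1 ∧ q i 0 = c 0 + ρ * (x i ^ 2 - y i ^ 2) ∧
      q i 1 = c 1 + ρ * (2 * x i * y i) := by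
  have key (i : ι) : ∃ x y : ℝ, x ^ 2 + y ^ 2 = 1 ∧ q i 0 = c 0 + ρ * (x ^ 2 - y ^ 2) ∧
      q i 1 = c 1 + ρ * (2 * x * y) := by
    have hd : (q i 0 - c 0) ^ 2 + (q i 1 - c 1) ^ 2 = ρ ^ 2 := by
      have := EuclideanSpace.dist_sq_eq (q i) c
      rw [h i, Fin.sum_univ_two, Real.dist_eq, Real.dist_eq, sq_abs, sq_abs] at this
      exact this.symm
    obtain ⟨x, y, hxy, hu, hv⟩ :=
      exists_double_angle (u := (q i 0 - c 0) / ρ) (v := (q i 1 - c 1) / ρ)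
        (by rw [div_pow, div_pow, ← add_div, hd]; field_simp)
    refine ⟨x, y, hxy, ?_, ?_⟩
    · rw [← hu]; field_simp; ring
    · rw [← hv]; field_simp; ring
  choose x y hxy using key
  exact ⟨x, y, hxy⟩

theorem exists_chord_parametrization {ι : Type*} [Fintype ι] (q : ι → EuclideanSpace ℝ (Fin 2))
    (c : EuclideanSpace ℝ (Fin 2)) {ρ : ℝ} (hρ : 0 < ρ) (h : ∀ i, dist (q i) c = ρ) :
    ∃ x y : ι → ℝ, (∀ i j, ‖q i - q j‖ = 2 * ρ * |x i * y j - x j * y i|) ∧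
      ∀ (i k : ι) (A : ι → ℝ), ∑ j, A j • (q j - q i) = 0 →
        ∑ j, A j * (x i * y j - x j * y i) * (x j * y k - x k * y j) = 0 := by
  obtain ⟨x, y, hxy⟩ := exists_halfAngle_of_cocircular q c hρ h
  have d0 (i j : ι) : q j 0 - q i 0
      = -(2 * ρ) * ((x i * y j - x j * y i) * (x i * y j + y i * x j)) := by
    rw [(hxy i).2.1, (hxy j).2.1]
    linear_combination ρ * (x i ^ 2 - y i ^ 2) * (hxy j).1 - ρ * (x j ^ 2 - y j ^ 2) * (hxy i).1
  have d1 (i j : ι) : q j 1 - q i 1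
      = 2 * ρ * ((x i * y j - x j * y i) * (x i * x j - y i * y j)) := by
    rw [(hxy i).2.2, (hxy j).2.2]
    linear_combination 2 * ρ * x i * y i * (hxy j).1 - 2 * ρ * x j * y j * (hxy i).1
  refine ⟨x, y, fun i j ↦ ?_, fun i k A hA ↦ ?_⟩
  · have h1 : (x i * y j + y i * x j) ^ 2 + (x i * x j - y i * y j) ^ 2 = 1 := by
      linear_combination (x j ^ 2 + y j ^ 2) * (hxy i).1 + (hxy j).1
    rw [← abs_of_pos (show 0 < 2 * ρ by positivity), ← abs_mul,
      ← abs_of_nonneg (norm_nonneg (q i - q j)), ← sq_eq_sq_iff_abs_eq_abs, norm_sub_rev,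
      EuclideanSpace.norm_sq_eq, Fin.sum_univ_two, PiLp.sub_apply, PiLp.sub_apply,
      Real.norm_eq_abs, Real.norm_eq_abs, sq_abs, sq_abs, d0, d1]
    linear_combination (2 * ρ * (x i * y j - x j * y i)) ^ 2 * h1
  · have e0 : ∑ j, A j * (q j 0 - q i 0) = 0 := by
      simpa using congrArg (fun v : EuclideanSpace ℝ (Fin 2) ↦ v 0) hA
    have e1 : ∑ j, A j * (q j 1 - q i 1) = 0 := by
      simpa using congrArg (fun v : EuclideanSpace ℝ (Fin 2) ↦ v 1) hA
    have e : 2 * ρ * ∑ j, A j * (x i * y j - x j * y i) * (x j * y k - x k * y j)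
        = (x i * y k + y i * x k) * ∑ j, A j * (q j 1 - q i 1)
          + (x i * x k - y i * y k) * ∑ j, A j * (q j 0 - q i 0) := by
      rw [mul_sum, mul_sum, mul_sum, ← sum_add_distrib]
      refine sum_congr rfl fun j _ ↦ ?_
      rw [d0, d1]
      linear_combination -2 * ρ * A j * (x i * y j - x j * y i) * (x j * y k - x k * y j)
        * (hxy i).1
    rw [e0, e1, mul_zero, mul_zero, add_zero] at e
    exact (mul_eq_zero.1 e).resolve_left (by positivity)

theorem exists_isPtolemyCritical_of_central (m : Fin 4 → ℝ) (hm : ∀ i, 0 < m i)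
    (q : Fin 4 → EuclideanSpace ℝ (Fin 2)) (hq : ∀ i j, i ≠ j → q i ≠ q j)
    (hcm : ∑ i, m i • q i = 0) (lam : ℝ)
    (hcc : ∀ i, (lam * m i) • q i =
      ∑ j ∈ univ.erase i, ((m i * m j) / ‖q j - q i‖ ^ 3) • (q j - q i))
    (hcirc : ∃ (c : EuclideanSpace ℝ (Fin 2)) (ρ : ℝ), ∀ i, dist (q i) c = ρ)
    (hptol : ‖q 0 - q 1‖ * ‖q 2 - q 3‖ + ‖q 0 - q 3‖ * ‖q 1 - q 2‖
      = ‖q 0 - q 2‖ * ‖q 1 - q 3‖) :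
    ∃ μ κ, 0 < μ ∧ 0 < κ ∧ IsPtolemyCritical m μ κ fun i j ↦ ‖q i - q j‖ := by
  obtain ⟨c, ρ, hc⟩ := hcirc
  have hρ : 0 < ρ := by
    refine lt_of_le_of_ne (hc 0 ▸ dist_nonneg) fun h0 ↦ hq 0 1 (by decide) ?_
    rw [← h0] at hc
    rw [dist_eq_zero.1 (hc 0), dist_eq_zero.1 (hc 1)]
  have hr (i j : Fin 4) (hij : i ≠ j) : 0 < ‖q i - q j‖ := norm_sub_pos_iff.2 (hq i j hij)
  obtain ⟨x, y, hnorm, hforce⟩ := exists_chord_parametrization q c hρ hc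
  obtain ⟨s, hs⟩ : ∃ s : Fin 4 → Fin 4 → ℝ, ∀ i j, s i j = x i * y j - x j * y i :=
    ⟨_, fun _ _ ↦ rfl⟩
  simp only [← hs] at hnorm hforce
  set μ := -lam / ∑ k, m k
  obtain ⟨B, hB⟩ : ∃ B : Fin 4 → Fin 4 → ℝ, ∀ i j, B i j = 1 / ‖q i - q j‖ ^ 3 - μ :=
    ⟨_, fun _ _ ↦ rfl⟩
  have hBsymm (i j : Fin 4) : B j i = B i j := by rw [hB, hB, norm_sub_rev]
  have hsymm (i j : Fin 4) : s j i = -s i j := by rw [hs, hs]; ring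
  have hself (i : Fin 4) : s i i = 0 := by rw [hs]; ring
  have force (i k : Fin 4) : ∑ j, m j * B j i * s i j * s j k = 0 := by
    refine hforce i k (fun j ↦ m j * B j i) ?_
    simp only [hB]
    exact sum_smul_sub_eq_zero_of_central m hm q hcm lam hcc i
  have plucker : s 0 1 * s 2 3 + s 0 3 * s 1 2 = s 0 2 * s 1 3 := by
    simp only [hs]; ring
  have hprod (i j k l : Fin 4) : ‖q i - q j‖ * ‖q k - q l‖ = 4 * ρ ^ 2 * |s i j * s k l| := by
    rw [hnorm, hnorm, abs_mul]; ring
  have hs0 (i j : Fin 4) (hij : i ≠ j) : s i j ≠ 0 := fun h0 ↦ by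
    have := hr i j hij
    rw [hnorm, h0] at this
    simp at this
  have hE (i j : Fin 4) (hij : i ≠ j) :
      m i * m j * (1 / ‖q i - q j‖ - μ * ‖q i - q j‖ ^ 2)
        = 4 * ρ ^ 2 * (m i * m j * B i j * s i j ^ 2) := by
    have h1 : ‖q i - q j‖ ^ 2 = 4 * ρ ^ 2 * s i j ^ 2 := by
      rw [hnorm, mul_pow, sq_abs]; ring
    have h2 : 1 / ‖q i - q j‖ - μ * ‖q i - q j‖ ^ 2 = B i j * ‖q i - q j‖ ^ 2 := by
      have := hr i j hij
      rw [hB]; field_simp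
    rw [h2, h1]; ring
  have ha : s 0 1 * s 2 3 ≠ 0 := mul_ne_zero (hs0 _ _ (by decide)) (hs0 _ _ (by decide))
  have hsign : ∃ δ : ℝ, δ ≠ 0 ∧ |s 0 1 * s 2 3| = δ * (s 0 1 * s 2 3) ∧
      |s 0 3 * s 1 2| = δ * (s 0 3 * s 1 2) ∧ |s 0 2 * s 1 3| = δ * (s 0 2 * s 1 3) := by
    have habs : |s 0 1 * s 2 3| + |s 0 3 * s 1 2| = |s 0 1 * s 2 3 + s 0 3 * s 1 2| := by
      rw [hprod, hprod, hprod, ← mul_add, ← plucker] at hptol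
      exact mul_left_cancel₀ (by positivity) hptol
    rw [← plucker]
    rcases abs_add_eq_add_abs_iff _ _ |>.1 habs.symm with ⟨h1, h2⟩ | ⟨h1, h2⟩
    · refine ⟨1, one_ne_zero, ?_, ?_, ?_⟩
      · rw [abs_of_nonneg h1, one_mul]
      · rw [abs_of_nonneg h2, one_mul]
      · rw [abs_of_nonneg (add_nonneg h1 h2), one_mul]
    · refine ⟨-1, by norm_num, ?_, ?_, ?_⟩
      · rw [abs_of_nonpos h1, neg_one_mul]
      · rw [abs_of_nonpos h2, neg_one_mul]
      · rw [abs_of_nonpos (add_nonpos h1 h2), neg_one_mul]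
  obtain ⟨δ, hδ, habs01, habs03, habs02⟩ := hsign
  have f02 := force 0 2
  have f03 := force 0 3
  have f12 := force 1 2
  have f13 := force 1 3
  have f21 := force 2 1
  simp only [Fin.sum_univ_four, hself, hBsymm 0 1, hBsymm 0 2, hBsymm 0 3, hBsymm 1 2, hBsymm 1 3,
    hBsymm 2 3, hsymm 0 1, hsymm 0 2, hsymm 1 2, hsymm 1 3, hsymm 2 3]
    at f02 f03 f12 f13 f21
  obtain ⟨κ, hκ⟩ : ∃ κ, m 0 * m 1 * B 0 1 * s 0 1 ^ 2 = κ * δ * (s 0 1 * s 2 3) :=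
    ⟨m 0 * m 1 * B 0 1 * s 0 1 ^ 2 / (δ * (s 0 1 * s 2 3)),
      by rw [mul_assoc _ δ, div_mul_cancel₀ _ (mul_ne_zero hδ ha)]⟩
  have h03 : m 0 * m 3 * B 0 3 * s 0 3 ^ 2 = κ * δ * (s 0 3 * s 1 2) :=
    mul_right_cancel₀ ha (by
      linear_combination (s 0 3 * s 1 2) * hκ - m 0 * s 0 1 * s 0 3 * f02)
  have h02 : m 0 * m 2 * B 0 2 * s 0 2 ^ 2 = -κ * δ * (s 0 2 * s 1 3) :=
    mul_right_cancel₀ ha (by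
      linear_combination -(s 0 2 * s 1 3) * hκ + m 0 * s 0 1 * s 0 2 * f03)
  have h13 : m 1 * m 3 * B 1 3 * s 1 3 ^ 2 = -κ * δ * (s 0 2 * s 1 3) :=
    mul_right_cancel₀ ha (by
      linear_combination -(s 0 2 * s 1 3) * hκ - m 1 * s 0 1 * s 1 3 * f12)
  have h12 : m 1 * m 2 * B 1 2 * s 1 2 ^ 2 = κ * δ * (s 0 3 * s 1 2) :=
    mul_right_cancel₀ ha (by
      linear_combination (s 0 3 * s 1 2) * hκ + m 1 * s 0 1 * s 1 2 * f13)
  have h23 : m 2 * m 3 * B 2 3 * s 2 3 ^ 2 = κ * δ * (s 0 1 * s 2 3) :=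
    mul_right_cancel₀
      (mul_ne_zero (hs0 0 2 (by decide)) (hs0 1 3 (by decide)) : s 0 2 * s 1 3 ≠ 0) (by
      linear_combination -(s 0 1 * s 2 3) * h02 - m 2 * s 0 2 * s 2 3 * f21)
  have hcrit : IsPtolemyCritical m μ κ fun i j ↦ ‖q i - q j‖ := by
    refine ⟨hptol, ?_, ?_, ?_, ?_, ?_, ?_⟩
    · rw [hE _ _ (by decide), hprod, habs01, hκ]; ring
    · rw [hE _ _ (by decide), hprod, habs01, h23]; ring
    · rw [hE _ _ (by decide), hprod, habs03, h03]; ring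
    · rw [hE _ _ (by decide), hprod, habs03, h12]; ring
    · rw [hE _ _ (by decide), hprod, habs02, h02]; ring
    · rw [hE _ _ (by decide), hprod, habs02, h13]; ring
  exact ⟨μ, κ, (hcrit.pos hm hr).1, (hcrit.pos hm hr).2, hcrit⟩

end CentralConfiguration

/-- Any two sequentially-ordered co-circular planar central configurations of
four bodies with the same positive masses are similar: they differ by a
nonzero scaling and a linear isometry. -/
theorem cocircular_cc_unique_up_to_similarity
    (m : Fin 4 → ℝ) (hm : ∀ i, 0 < m i)
    (q q' : Fin 4 → EuclideanSpace ℝ (Fin 2))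
    (hq : ∀ i j, i ≠ j → q i ≠ q j) (hq' : ∀ i j, i ≠ j → q' i ≠ q' j)
    (hcm : ∑ i, m i • q i = 0) (hcm' : ∑ i, m i • q' i = 0)
    (lam lam' : ℝ)
    (hcc : ∀ i, (lam * m i) • q i =
      ∑ j ∈ Finset.univ.erase i, ((m i * m j) / ‖q j - q i‖^3) • (q j - q i))
    (hcc' : ∀ i, (lam' * m i) • q' i =
      ∑ j ∈ Finset.univ.erase i, ((m i * m j) / ‖q' j - q' i‖^3) • (q' j - q' i))
    (hcirc : ∃ (c : EuclideanSpace ℝ (Fin 2)) (ρ : ℝ), ∀ i, dist (q i) c = ρ)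
    (hcirc' : ∃ (c' : EuclideanSpace ℝ (Fin 2)) (ρ' : ℝ), ∀ i, dist (q' i) c' = ρ')
    (hptol : ‖q 0 - q 1‖ * ‖q 2 - q 3‖ + ‖q 0 - q 3‖ * ‖q 1 - q 2‖
      = ‖q 0 - q 2‖ * ‖q 1 - q 3‖)
    (hptol' : ‖q' 0 - q' 1‖ * ‖q' 2 - q' 3‖ + ‖q' 0 - q' 3‖ * ‖q' 1 - q' 2‖
      = ‖q' 0 - q' 2‖ * ‖q' 1 - q' 3‖) :
    ∃ (k : ℝ) (R : EuclideanSpace ℝ (Fin 2) ≃ₗᵢ[ℝ] EuclideanSpace ℝ (Fin 2)),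
      k ≠ 0 ∧ ∀ i, q' i = k • R (q i) := by
  obtain ⟨μ, κ, hμ, hκ, hcrit⟩ :=
    exists_isPtolemyCritical_of_central m hm q hq hcm lam hcc hcirc hptol
  obtain ⟨μ', κ', hμ', hκ', hcrit'⟩ :=
    exists_isPtolemyCritical_of_central m hm q' hq' hcm' lam' hcc' hcirc' hptol'
  obtain ⟨k, hk, hk3⟩ : ∃ k : ℝ, 0 < k ∧ μ' * k ^ 3 = μ := by
    refine ⟨(μ / μ') ^ (1 / 3 : ℝ), by positivity, ?_⟩
    rw [← Real.rpow_natCast, ← Real.rpow_mul (by positivity)]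
    norm_num
    field_simp
  obtain ⟨h01, h23, h03, h12, h02, h13⟩ :=
    IsPtolemyCritical.eq hm hμ' (div_pos hκ (pow_pos hk 3)) hκ'
      (fun i j hij ↦ mul_pos hk (norm_sub_pos_iff.2 (hq i j hij)))
      (fun i j hij ↦ norm_sub_pos_iff.2 (hq' i j hij))
      (IsPtolemyCritical.smul hk (hk3 ▸ hcrit)) hcrit'
  have hdist (i j : Fin 4) : ‖q i - q j‖ = ‖k⁻¹ • q' i - k⁻¹ • q' j‖ := by
    rw [← smul_sub, norm_smul, norm_inv, Real.norm_of_nonneg hk.le, eq_inv_mul_iff_mul_eq₀ hk.ne']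
    have hrev {i j : Fin 4} (h : k * ‖q i - q j‖ = ‖q' i - q' j‖) :
        k * ‖q j - q i‖ = ‖q' j - q' i‖ := by
      rwa [norm_sub_rev (q j), norm_sub_rev (q' j)]
    have hself (i : Fin 4) : k * ‖q i - q i‖ = ‖q' i - q' i‖ := by simp
    match i, j with
    | 0, 0 | 1, 1 | 2, 2 | 3, 3 => exact hself _
    | 0, 1 => exact h01
    | 0, 2 => exact h02
    | 0, 3 => exact h03
    | 1, 2 => exact h12
    | 1, 3 => exact h13
    | 2, 3 => exact h23
    | 1, 0 => exact hrev h01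
    | 2, 0 => exact hrev h02
    | 3, 0 => exact hrev h03
    | 2, 1 => exact hrev h12
    | 3, 1 => exact hrev h13
    | 3, 2 => exact hrev h23
  have hcm'' : ∑ i, m i • (k⁻¹ • q' i) = 0 := by
    simp only [smul_comm (m _) k⁻¹, ← smul_sum, hcm', smul_zero]
  obtain ⟨R, hR⟩ := exists_linearIsometryEquiv_of_inner_eq q (fun i ↦ k⁻¹ • q' i)
    (inner_eq_of_norm_sub_eq m (sum_pos (fun i _ ↦ hm i) univ_nonempty) q (fun i ↦ k⁻¹ • q' i)
      hcm hcm'' hdist)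
  exact ⟨k, R, hk.ne', fun i ↦ by rw [hR, smul_inv_smul₀ hk.ne']⟩
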